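/- Let F : 𝔞 ⥤ 𝔟 be an additive, full, essentially surjective functor between preadditive categories with nilpotent kernel ideal. If A, B, C are objects of 𝔞 and s₁ : A → C, s₂ : B → C are morphisms such that (F(C), F(s₁), F(s₂)) is a binary coproduct of F(A) and F(B) in 𝔟, then (C, s₁, s₂) is a binary coproduct of A and B in 𝔞. -/

import Mathlib

/-!
An endomorphism `f` with `F f = 𝟙` is invertible, because `𝟙 - f` is nilpotent in the endomorphism
ring (`isIso_of_map_eq_id`). By fullness, the projections of `F C` onto `F X` and `F Y`
lift to `p : C ⟶ X` and `q : C ⟶ Y`. The composites `s₁ ≫ p` and `s₂ ≫ q` map to identities, hence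
are invertible, so a triangular change of `p` and `q` makes the relations `s₁ ≫ p = 𝟙`,
`s₂ ≫ q = 𝟙`, `s₁ ≫ q = 0`, `s₂ ≫ p = 0` hold exactly (`exists_projections`). Every pair of maps
out of `X` and `Y` then extends to `C`. The extension is unique because `p ≫ s₁ + q ≫ s₂` maps to
the identity of `F C`, so it is an isomorphism, in particular an epimorphism.
-/

open CategoryTheory CategoryTheory.Limits

universe v₁ v₂ u₁ u₂

/-- `KerCompPow F n f` holds if `f` is a composite of `n` morphisms each of which is sent
to zero by `F`. -/
inductive KerCompPow {A : Type u₁} [Category.{v₁} A] {B : Type u₂} [Category.{v₂} B]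
    [Preadditive A] [Preadditive B] (F : A ⥤ B) :
    ℕ → ∀ {X Y : A}, (X ⟶ Y) → Prop
  | single {X Y : A} (f : X ⟶ Y) (hf : F.map f = 0) : KerCompPow F 1 f
  | comp {n : ℕ} {X Y Z : A} (f : X ⟶ Y) (g : Y ⟶ Z) (hf : KerCompPow F n f)
      (hg : F.map g = 0) : KerCompPow F (n + 1) (f ≫ g)

/-- A functor `F : 𝔞 ⥤ 𝔟` between preadditive categories has nilpotent kernel ideal if
there is `n ≥ 1` such that every composite of `n` morphisms killed by `F` is zero. -/
def HasNilpotentKernelIdeal {A : Type u₁} [Category.{v₁} A] {B : Type u₂} [Category.{v₂} B]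
    [Preadditive A] [Preadditive B] (F : A ⥤ B) : Prop :=
  ∃ n : ℕ, 0 < n ∧ ∀ {X Y : A} (f : X ⟶ Y), KerCompPow F n f → f = 0

section

variable {A : Type u₁} [Category.{v₁} A] {B : Type u₂} [Category.{v₂} B]
  [Preadditive A] [Preadditive B] {F : A ⥤ B}

theorem kerCompPow_pow {X : A} (f : End X) (hf : F.map f = 0) (n : ℕ) :
    KerCompPow F (n + 1) (f ^ (n + 1) : End X) := by
  induction n with
  | zero => simpa using KerCompPow.single (F := F) f hf
  | succ n ih =>
    rw [pow_succ']
    exact KerCompPow.comp _ _ ih hf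

theorem isIso_of_map_eq_id [F.Additive] (hnil : HasNilpotentKernelIdeal F)
    {X : A} (f : X ⟶ X) (hf : F.map f = 𝟙 (F.obj X)) : IsIso f := by
  obtain ⟨n, hn, hF⟩ := hnil
  obtain ⟨m, rfl⟩ : ∃ m, n = m + 1 := ⟨n - 1, by omega⟩
  have hker : F.map (𝟙 X - f) = 0 := by rw [F.map_sub, F.map_id, hf, sub_self]
  have hnilp : IsNilpotent ((1 : End X) - (show End X from f)) :=
    ⟨m + 1, hF _ (kerCompPow_pow _ hker m)⟩
  have hu : IsUnit (show End X from f) := by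
    have h := hnilp.isUnit_one_sub
    rwa [sub_sub_cancel] at h
  exact (isUnit_iff_isIso f).1 hu

/-- It is enough that the projection relations hold in triangular form after applying `F`:
correcting `p` and `q` then yields all four relations in `A` itself. -/
theorem exists_projections [F.Additive] (hnil : HasNilpotentKernelIdeal F)
    {X Y C : A} {s₁ : X ⟶ C} {s₂ : Y ⟶ C} (p : C ⟶ X) (q : C ⟶ Y)
    (h₁p : F.map s₁ ≫ F.map p = 𝟙 _)
    (h₁q : F.map s₁ ≫ F.map q = 0) (h₂q : F.map s₂ ≫ F.map q = 𝟙 _) :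
    ∃ (p' : C ⟶ X) (q' : C ⟶ Y),
      s₁ ≫ p' = 𝟙 X ∧ s₂ ≫ p' = 0 ∧ s₁ ≫ q' = 0 ∧ s₂ ≫ q' = 𝟙 Y := by
  -- Normalise `p` to a retraction `p₁` of `s₁`.
  have : IsIso (s₁ ≫ p) := isIso_of_map_eq_id hnil _ (by rw [F.map_comp, h₁p])
  obtain ⟨p₁, hp₁⟩ : ∃ p₁ : C ⟶ X, s₁ ≫ p₁ = 𝟙 X :=
    ⟨p ≫ inv (s₁ ≫ p), by rw [← Category.assoc, IsIso.hom_inv_id]⟩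
  -- Make `q` vanish on `s₁` by subtracting its component along `p₁`.
  obtain ⟨q₁, hq₁F, hq₁⟩ : ∃ q₁ : C ⟶ Y, F.map q₁ = F.map q ∧ s₁ ≫ q₁ = 0 :=
    ⟨q - p₁ ≫ s₁ ≫ q, by simp [h₁q], by simp [reassoc_of% hp₁]⟩
  -- Normalise `q₁` to a retraction `q₂` of `s₂`; it still vanishes on `s₁`.
  have : IsIso (s₂ ≫ q₁) := isIso_of_map_eq_id hnil _ (by rw [F.map_comp, hq₁F, h₂q])
  obtain ⟨q₂, hq₂, hq₂'⟩ : ∃ q₂ : C ⟶ Y, s₁ ≫ q₂ = 0 ∧ s₂ ≫ q₂ = 𝟙 Y :=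
    ⟨q₁ ≫ inv (s₂ ≫ q₁), by rw [reassoc_of% hq₁, zero_comp],
      by rw [← Category.assoc, IsIso.hom_inv_id]⟩
  -- Make `p₁` vanish on `s₂`; since `s₁ ≫ q₂ = 0`, it remains a retraction of `s₁`.
  refine ⟨p₁ - q₂ ≫ s₂ ≫ p₁, q₂, ?_, ?_, hq₂, hq₂'⟩
  · simp [hp₁, reassoc_of% hq₂]
  · simp [reassoc_of% hq₂']

end

/-- Let `F : 𝔞 ⥤ 𝔟` be an additive, full, essentially surjective functor between
preadditive categories with nilpotent kernel ideal.  If `(F(C), F(s₁), F(s₂))` is a binary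
coproduct of `F(A)` and `F(B)` in `𝔟`, then `(C, s₁, s₂)` is a binary coproduct of `A` and
`B` in `𝔞`. -/
theorem isColimit_binaryCofan_of_map_of_nilpotent_kernel_ideal
    {A : Type u₁} [Category.{v₁} A] {B : Type u₂} [Category.{v₂} B]
    [Preadditive A] [Preadditive B]
    (F : A ⥤ B) [F.Additive] [F.Full] [F.EssSurj]
    (hnil : HasNilpotentKernelIdeal F)
    (X Y C : A) (s₁ : X ⟶ C) (s₂ : Y ⟶ C)
    (h : Nonempty (IsColimit (BinaryCofan.mk (F.map s₁) (F.map s₂)))) :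
    Nonempty (IsColimit (BinaryCofan.mk s₁ s₂)) := by
  obtain ⟨h⟩ := h
  obtain ⟨p', hp'⟩ := F.map_surjective (h.desc (BinaryCofan.mk (𝟙 (F.obj X)) 0))
  obtain ⟨q', hq'⟩ := F.map_surjective (h.desc (BinaryCofan.mk 0 (𝟙 (F.obj Y))))
  obtain ⟨p, q, h₁p, h₂p, h₁q, h₂q⟩ :=
    exists_projections hnil (s₁ := s₁) (s₂ := s₂) p' q'
      (by rw [hp']; exact h.fac _ ⟨WalkingPair.left⟩)
      (by rw [hq']; exact h.fac _ ⟨WalkingPair.left⟩)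
      (by rw [hq']; exact h.fac _ ⟨WalkingPair.right⟩)
  have hφ : IsIso (p ≫ s₁ + q ≫ s₂) := by
    refine isIso_of_map_eq_id hnil _ (BinaryCofan.IsColimit.hom_ext h ?_ ?_)
    · change F.map s₁ ≫ F.map _ = F.map s₁ ≫ 𝟙 _
      rw [← F.map_comp]
      simp [reassoc_of% h₁p, reassoc_of% h₁q]
    · change F.map s₂ ≫ F.map _ = F.map s₂ ≫ 𝟙 _
      rw [← F.map_comp]
      simp [reassoc_of% h₂p, reassoc_of% h₂q]
  have hfac₁ {T : A} (u : X ⟶ T) (v : Y ⟶ T) : s₁ ≫ (p ≫ u + q ≫ v) = u := by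
    simp [reassoc_of% h₁p, reassoc_of% h₁q]
  have hfac₂ {T : A} (u : X ⟶ T) (v : Y ⟶ T) : s₂ ≫ (p ≫ u + q ≫ v) = v := by
    simp [reassoc_of% h₂p, reassoc_of% h₂q]
  have huniq {T : A} (u : X ⟶ T) (v : Y ⟶ T) (m : C ⟶ T) (h₁ : s₁ ≫ m = u)
      (h₂ : s₂ ≫ m = v) : m = p ≫ u + q ≫ v := by
    rw [← cancel_epi (p ≫ s₁ + q ≫ s₂)]
    simp only [Preadditive.add_comp, Category.assoc, h₁, h₂, hfac₁, hfac₂]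
  exact ⟨BinaryCofan.IsColimit.mk _ (fun u v => p ≫ u + q ≫ v) hfac₁ hfac₂ huniq⟩
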